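/- Let n ≥ 1 and 1 ≤ p₂ ≤ p₁ < ∞. Suppose Ψ₁ : (0,∞) → (0,∞) satisfies the doubling condition (there is A₁ > 0 with A₁⁻¹ ≤ Ψ₁(s)/Ψ₁(r) ≤ A₁ whenever 1 ≤ s/r ≤ 2), Ψ₂ : (0,∞) → (0,∞) satisfies the right-doubling condition (there is A₃ > 0 with Ψ₂(s)/Ψ₂(r) ≤ A₃ whenever 1 ≤ s/r ≤ 2), and ∫₀¹ Ψ₁(t)^{p₂} Ψ₂(t) / t dt < ∞. Then L^{p₁,Ψ₁}(ℝ^n) ⊆ S_{p₂,Ψ₂}(ℝ^n); moreover there is c > 0 such that η_{p₂,Ψ₂}f(r) ≤ c ( ∫₀^{r/2} Ψ₁(t)^{p₂} Ψ₂(t)/t dt )^{1/p₂} ‖f‖_{L^{p₁,Ψ₁}} for every f ∈ L^{p₁,Ψ₁} and r > 0. -/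

import Mathlib

/-!
The idea is to replace the usual dyadic decomposition of `B(x, r)` by an averaging argument. Write
`d = |x - y|`. Right-doubling of `Ψ₂` bounds the kernel `Ψ₂(d)/d^n` by a constant times
`∫_{d/4}^{d/2} Ψ₂(t) t^{-n-1} dt` (`kernel_le_lintegral`). Inserting this bound and applying
Tonelli's theorem, the integral defining the Stummel modulus is at most a constant times
`∫_0^{r/2} Ψ₂(t) t^{-n-1} ∫_{B(x,4t)} |f|^{p₂} dy dt`. By Hölder's inequality
(`lintegral_ball_le_morreyNorm`) the inner integral is at most
`|B(x,4t)| Ψ₁(4t)^{p₂} ‖f‖^{p₂}`, and the doubling of `Ψ₁` turns this into a constant times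
`t^n Ψ₁(t)^{p₂} ‖f‖^{p₂}`; this is `lintegral_stummel_le`, and the quantitative bound follows by
taking roots.

Doubling also bounds both weights on compact subsets of `[1, ∞)`, so the weight
`Ψ₁^{p₂} Ψ₂ / t` is integrable on every `(0, R)` (`integrableOn_weight`). Hence the modulus is
finite for every `r`, and it tends to `0` with `r` by absolute continuity of the integral.
-/

open MeasureTheory Metric Filter Set ENNReal

noncomputable section

/-- Euclidean space ℝ^n. -/
abbrev Euc (n : ℕ) := EuclideanSpace ℝ (Fin n)

/-- Stummel p-modulus with general weight Ψ:
`η_{p,Ψ}f(r) = sup_x ( ∫_{|x-y|<r} |f(y)|^p Ψ(|x-y|)/|x-y|^n dy )^{1/p}`. -/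
noncomputable def stummelMod (n : ℕ) (p : ℝ) (Ψ : ℝ → ℝ) (f : Euc n → ℝ) (r : ℝ) : ℝ≥0∞ :=
  ⨆ x : Euc n,
    (∫⁻ y in ball x r,
        ENNReal.ofReal (|f y| ^ p * Ψ (dist x y) / dist x y ^ (n : ℝ))) ^ (1 / p)

/-- Stummel p-modulus with power weight Ψ(t) = t^α:
`η_{p,α}f(r) = sup_x ( ∫_{|x-y|<r} |f(y)|^p / |x-y|^{n-α} dy )^{1/p}`. -/
noncomputable def stummelModA (n : ℕ) (p α : ℝ) (f : Euc n → ℝ) (r : ℝ) : ℝ≥0∞ :=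
  ⨆ x : Euc n,
    (∫⁻ y in ball x r,
        ENNReal.ofReal (|f y| ^ p / dist x y ^ ((n : ℝ) - α))) ^ (1 / p)

/-- f ∈ L^p_loc(ℝ^n). -/
def MemLocLp (n : ℕ) (p : ℝ) (f : Euc n → ℝ) : Prop :=
  LocallyIntegrable (fun y => |f y| ^ p) volume

/-- The generalized Stummel p-class `S_{p,Ψ}`. -/
def MemStummel (n : ℕ) (p : ℝ) (Ψ : ℝ → ℝ) (f : Euc n → ℝ) : Prop :=
  MemLocLp n p f ∧ (∀ r > 0, stummelMod n p Ψ f r < ⊤) ∧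
    Tendsto (stummelMod n p Ψ f) (nhdsWithin 0 (Ioi 0)) (nhds 0)

/-- The Stummel p-class `S_{p,α}` (power weight). -/
def MemStummelA (n : ℕ) (p α : ℝ) (f : Euc n → ℝ) : Prop :=
  MemLocLp n p f ∧ (∀ r > 0, stummelModA n p α f r < ⊤) ∧
    Tendsto (stummelModA n p α f) (nhdsWithin 0 (Ioi 0)) (nhds 0)

/-- The bounded Stummel modulus class `S̃_{p,α}`. -/
def MemStummelBddA (n : ℕ) (p α : ℝ) (f : Euc n → ℝ) : Prop :=
  MemLocLp n p f ∧ ∀ r > 0, stummelModA n p α f r < ⊤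

/-- Generalized Morrey norm `‖f‖_{L^{p,Ψ}}`. -/
noncomputable def morreyNorm (n : ℕ) (p : ℝ) (Ψ : ℝ → ℝ) (f : Euc n → ℝ) : ℝ≥0∞ :=
  ⨆ (x : Euc n) (r : ℝ) (_ : 0 < r),
    (volume (ball x r))⁻¹ ^ (1 / p) * ENNReal.ofReal (Ψ r)⁻¹ *
      (∫⁻ y in ball x r, ENNReal.ofReal (|f y| ^ p)) ^ (1 / p)

/-- The generalized Morrey space `L^{p,Ψ}`. -/
def MemMorrey (n : ℕ) (p : ℝ) (Ψ : ℝ → ℝ) (f : Euc n → ℝ) : Prop :=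
  MemLocLp n p f ∧ morreyNorm n p Ψ f < ⊤

/-- Classical Morrey norm `‖f‖_{L^{p,λ}}`. -/
noncomputable def morreyNormC (n : ℕ) (p lam : ℝ) (f : Euc n → ℝ) : ℝ≥0∞ :=
  ⨆ (x : Euc n) (r : ℝ) (_ : 0 < r),
    ENNReal.ofReal (r ^ (-(lam / p))) *
      (∫⁻ y in ball x r, ENNReal.ofReal (|f y| ^ p)) ^ (1 / p)

/-- The classical Morrey space `L^{p,λ}`. -/
def MemMorreyC (n : ℕ) (p lam : ℝ) (f : Euc n → ℝ) : Prop :=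
  MemLocLp n p f ∧ morreyNormC n p lam f < ⊤

/-- Generalized weak Morrey norm `‖f‖_{wL^{p,Ψ}}`. -/
noncomputable def weakMorreyNorm (n : ℕ) (p : ℝ) (Ψ : ℝ → ℝ) (f : Euc n → ℝ) : ℝ≥0∞ :=
  ⨆ (x : Euc n) (r : ℝ) (_ : 0 < r) (t : ℝ) (_ : 0 < t),
    ENNReal.ofReal t * (volume {y ∈ ball x r | t < |f y|}) ^ (1 / p) /
      (ENNReal.ofReal (Ψ r) * (volume (ball x r)) ^ (1 / p))

/-- The generalized weak Morrey space `wL^{p,Ψ}`. -/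
def MemWeakMorrey (n : ℕ) (p : ℝ) (Ψ : ℝ → ℝ) (f : Euc n → ℝ) : Prop :=
  Measurable f ∧ weakMorreyNorm n p Ψ f < ⊤

/-- Classical weak Morrey norm `‖f‖_{wL^{p,λ}}`. -/
noncomputable def weakMorreyNormC (n : ℕ) (p lam : ℝ) (f : Euc n → ℝ) : ℝ≥0∞ :=
  ⨆ (x : Euc n) (r : ℝ) (_ : 0 < r) (t : ℝ) (_ : 0 < t),
    ENNReal.ofReal (r ^ (-(lam / p))) * ENNReal.ofReal t *
      (volume {y ∈ ball x r | t < |f y|}) ^ (1 / p)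

/-- The classical weak Morrey space `wL^{p,λ}`. -/
def MemWeakMorreyC (n : ℕ) (p lam : ℝ) (f : Euc n → ℝ) : Prop :=
  Measurable f ∧ weakMorreyNormC n p lam f < ⊤

/-- Decreasing rearrangement `f*(t) = inf{σ > 0 : |{|f| > σ}| ≤ t}`. -/
noncomputable def rearrangement (n : ℕ) (f : Euc n → ℝ) (t : ℝ) : ℝ :=
  sInf {σ : ℝ | 0 < σ ∧ volume {x : Euc n | σ < |f x|} ≤ ENNReal.ofReal t}

/-- Lorentz norm `‖f‖_{L^p_κ} = ( ∫₀^∞ (t^{1/κ} f*(t))^p dt/t )^{1/p}`. -/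
noncomputable def lorentzNorm (n : ℕ) (kappa p : ℝ) (f : Euc n → ℝ) : ℝ≥0∞ :=
  (∫⁻ t in Ioi (0 : ℝ),
      ENNReal.ofReal ((t ^ (1 / kappa) * rearrangement n f t) ^ p / t)) ^ (1 / p)

/-- The Lorentz space `L^p_κ`. -/
def MemLorentz (n : ℕ) (kappa p : ℝ) (f : Euc n → ℝ) : Prop :=
  Measurable f ∧ lorentzNorm n kappa p f < ⊤

end

/-- Measurability of `|f|` follows from that of `|f|^p`; `f` itself may fail to be measurable. -/
lemma MemLocLp.aemeasurable_abs {n : ℕ} {p : ℝ} (hp : 0 < p) {f : Euc n → ℝ}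
    (hf : MemLocLp n p f) : AEMeasurable (fun y => |f y|) volume := by
  have h : AEMeasurable (fun y => |f y| ^ p) volume :=
    (LocallyIntegrable.aestronglyMeasurable hf).aemeasurable
  have h2 : AEMeasurable (fun y => (|f y| ^ p) ^ (1 / p)) volume := h.pow_const _
  refine h2.congr (Eventually.of_forall fun y => ?_)
  simp only [one_div]
  exact Real.rpow_rpow_inv (abs_nonneg _) hp.ne'

lemma MemLocLp.mono_exponent {n : ℕ} {p q : ℝ} (hp : 0 < p) (hpq : p ≤ q) {f : Euc n → ℝ}
    (hf : MemLocLp n q f) : MemLocLp n p f := by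
  have hm := hf.aemeasurable_abs (hp.trans_le hpq)
  have h1 : LocallyIntegrable (fun y => 1 + |f y| ^ q) volume :=
    (locallyIntegrable_const (1 : ℝ)).add hf
  refine h1.mono (hm.pow_const p).aestronglyMeasurable (Eventually.of_forall fun y => ?_)
  have h0 := abs_nonneg (f y)
  have hq0 := Real.rpow_nonneg h0 q
  rw [Real.norm_of_nonneg (Real.rpow_nonneg h0 p), Real.norm_of_nonneg (by positivity)]
  rcases le_total (|f y|) 1 with h | h
  · linarith [Real.rpow_le_one h0 h hp.le]
  · linarith [Real.rpow_le_rpow_of_exponent_le h hpq]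

/-- Hölder's inequality on a ball: the `p₁`-Morrey norm controls the `p₂`-averages of `f`
for `p₂ ≤ p₁`. -/
lemma lintegral_ball_le_morreyNorm {n : ℕ} {p₁ p₂ : ℝ} (hp₂ : 0 < p₂) (hp : p₂ ≤ p₁)
    {Ψ : ℝ → ℝ} {f : Euc n → ℝ} (hf : MemLocLp n p₁ f) (x : Euc n) {s : ℝ} (hs : 0 < s)
    (hΨ : 0 < Ψ s) :
    ∫⁻ y in ball x s, ENNReal.ofReal (|f y| ^ p₂) ≤
      volume (ball x s) * (ENNReal.ofReal (Ψ s) * morreyNorm n p₁ Ψ f) ^ p₂ := by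
  have hp₁ : 0 < p₁ := hp₂.trans_le hp
  set V := volume (ball x s) with hV
  have hV0 : V ≠ 0 := (measure_ball_pos volume x hs).ne'
  have hVt : V ≠ ⊤ := measure_ball_lt_top.ne
  have hm := hf.aemeasurable_abs hp₁
  have henorm : ∀ {q : ℝ}, 0 < q → ∀ y, ‖|f y|‖ₑ ^ q = ENNReal.ofReal (|f y| ^ q) := by
    intro q hq y
    rw [← ENNReal.ofReal_rpow_of_nonneg (abs_nonneg _) hq.le,
      Real.enorm_of_nonneg (abs_nonneg _)]
  have holder := eLpNorm'_le_eLpNorm'_mul_rpow_measure_univ hp₂ hp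
    (hm.aestronglyMeasurable.restrict (s := ball x s))
  simp only [eLpNorm', henorm hp₂, henorm hp₁, Measure.restrict_apply_univ] at holder
  rw [← hV] at holder
  have hN : V⁻¹ ^ (1 / p₁) * ENNReal.ofReal (Ψ s)⁻¹ *
      (∫⁻ y in ball x s, ENNReal.ofReal (|f y| ^ p₁)) ^ (1 / p₁) ≤ morreyNorm n p₁ Ψ f :=
    le_iSup_of_le x (le_iSup_of_le s (le_iSup_of_le hs le_rfl))
  set X := (∫⁻ y in ball x s, ENNReal.ofReal (|f y| ^ p₁)) ^ (1 / p₁)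
  set N := morreyNorm n p₁ Ψ f
  have hX : X ≤ V ^ (1 / p₁) * ENNReal.ofReal (Ψ s) * N := by
    have hW0 : V ^ (1 / p₁) ≠ 0 := by simp [ENNReal.rpow_eq_zero_iff, hV0, hVt]
    have hWt : V ^ (1 / p₁) ≠ ⊤ := ENNReal.rpow_ne_top_of_nonneg (by positivity) hVt
    have h0 : V ^ (1 / p₁) * ENNReal.ofReal (Ψ s) ≠ 0 :=
      mul_ne_zero hW0 (by simpa using hΨ)
    have ht : V ^ (1 / p₁) * ENNReal.ofReal (Ψ s) ≠ ⊤ := ENNReal.mul_ne_top hWt (by simp)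
    rw [ENNReal.inv_rpow, ENNReal.ofReal_inv_of_pos hΨ,
      ← ENNReal.mul_inv (Or.inl hW0) (Or.inl hWt)] at hN
    calc X = (V ^ (1 / p₁) * ENNReal.ofReal (Ψ s)) *
          ((V ^ (1 / p₁) * ENNReal.ofReal (Ψ s))⁻¹ * X) := by
            rw [← mul_assoc, ENNReal.mul_inv_cancel h0 ht, one_mul]
      _ ≤ _ := by gcongr
  have hY : (∫⁻ y in ball x s, ENNReal.ofReal (|f y| ^ p₂)) ^ (1 / p₂) ≤
      V ^ (1 / p₂) * (ENNReal.ofReal (Ψ s) * N) := by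
    calc _ ≤ X * V ^ (1 / p₂ - 1 / p₁) := holder
      _ ≤ (V ^ (1 / p₁) * ENNReal.ofReal (Ψ s) * N) * V ^ (1 / p₂ - 1 / p₁) := by gcongr
      _ = (V ^ (1 / p₁) * V ^ (1 / p₂ - 1 / p₁)) * (ENNReal.ofReal (Ψ s) * N) := by ring
      _ = _ := by rw [← ENNReal.rpow_add _ _ hV0 hVt]; congr 2; ring
  have := ENNReal.rpow_le_rpow hY hp₂.le
  rwa [ENNReal.mul_rpow_of_nonneg _ _ hp₂.le, ← ENNReal.rpow_mul, ← ENNReal.rpow_mul,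
    one_div_mul_cancel hp₂.ne', ENNReal.rpow_one, ENNReal.rpow_one] at this

/-- Right-doubling applied twice. -/
lemma le_of_rightDoubling {Ψ : ℝ → ℝ} (hpos : ∀ t > 0, 0 < Ψ t) {A : ℝ} (hA : 0 < A)
    (hdbl : ∀ r s : ℝ, 0 < r → r ≤ s → s ≤ 2 * r → Ψ s / Ψ r ≤ A)
    {t d : ℝ} (ht : 0 < t) (h1 : 2 * t ≤ d) (h2 : d ≤ 4 * t) : Ψ d ≤ A ^ 2 * Ψ t := by
  have e1 := hdbl t (2 * t) ht (by linarith) le_rfl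
  have e2 := hdbl (2 * t) d (by linarith) h1 (by linarith)
  rw [div_le_iff₀ (hpos _ ht)] at e1
  rw [div_le_iff₀ (hpos _ (by linarith))] at e2
  nlinarith

/-- The kernel `Ψ(d)/d^n` is dominated by its logarithmic average over `d/4 < t < d/2`. Since
`t < d/2 < r/2` there, this is where the upper limit `r/2` comes from. -/
lemma kernel_le_lintegral {n : ℕ} {Ψ : ℝ → ℝ} (hpos : ∀ t > 0, 0 < Ψ t) {A : ℝ} (hA : 0 < A)
    (hdbl : ∀ r s : ℝ, 0 < r → r ≤ s → s ≤ 2 * r → Ψ s / Ψ r ≤ A)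
    {d r : ℝ} (hd : 0 < d) (hdr : d < r) :
    ENNReal.ofReal (Ψ d / d ^ n) ≤ ENNReal.ofReal (4 * A ^ 2) *
      ∫⁻ t in Ioo (0 : ℝ) (r / 2),
        {t : ℝ | d < 4 * t}.indicator (fun t => ENNReal.ofReal (Ψ t / t ^ (n + 1))) t := by
  have hsub : Ioo (d / 4) (d / 2) ⊆ Ioo (0 : ℝ) (r / 2) :=
    Ioo_subset_Ioo (by linarith) (by linarith)
  have hΨd := hpos d hd
  have hlow : ENNReal.ofReal (Ψ d / (A ^ 2 * d ^ (n + 1)) * (d / 4)) ≤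
      ∫⁻ t in Ioo (d / 4) (d / 2),
        {t : ℝ | d < 4 * t}.indicator (fun t => ENNReal.ofReal (Ψ t / t ^ (n + 1))) t := by
    calc ENNReal.ofReal (Ψ d / (A ^ 2 * d ^ (n + 1)) * (d / 4))
        = ∫⁻ _ in Ioo (d / 4) (d / 2), ENNReal.ofReal (Ψ d / (A ^ 2 * d ^ (n + 1))) := by
          rw [setLIntegral_const, Real.volume_Ioo, ENNReal.ofReal_mul (by positivity)]
          congr 2; ring
      _ ≤ _ := by
          refine setLIntegral_mono' measurableSet_Ioo fun t ht => ?_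
          have ht0 : 0 < t := by linarith [ht.1]
          have h4 : d < 4 * t := by linarith [ht.1]
          have h2 : 2 * t ≤ d := by linarith [ht.2]
          rw [indicator_of_mem (by exact h4)]
          refine ENNReal.ofReal_le_ofReal ?_
          have hd2 := le_of_rightDoubling hpos hA hdbl ht0 h2 h4.le
          have hpow : t ^ (n + 1) ≤ d ^ (n + 1) := pow_le_pow_left₀ ht0.le (by linarith) _
          have hΨt := hpos t ht0
          rw [div_le_div_iff₀ (by positivity) (by positivity)]
          calc Ψ d * t ^ (n + 1) ≤ (A ^ 2 * Ψ t) * d ^ (n + 1) := by gcongr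
            _ = _ := by ring
  calc ENNReal.ofReal (Ψ d / d ^ n)
      = ENNReal.ofReal (4 * A ^ 2) * ENNReal.ofReal (Ψ d / (A ^ 2 * d ^ (n + 1)) * (d / 4)) := by
        rw [← ENNReal.ofReal_mul (by positivity)]
        congr 1
        field_simp
        ring
    _ ≤ _ := by
        gcongr
        exact hlow.trans (lintegral_mono_set hsub)

/-- The estimate before taking `p₂`-th roots. Inserting `kernel_le_lintegral` and exchanging the
order of integration leaves the integrals of `|f|^p₂` over the balls `B(x, 4t)`, `t < r/2`. -/
lemma lintegral_stummel_le {n : ℕ} (hn : 1 ≤ n) {p₁ p₂ : ℝ} (hp₂ : 0 < p₂) (hp : p₂ ≤ p₁)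
    {Ψ₁ Ψ₂ : ℝ → ℝ} (hΨ₁meas : Measurable Ψ₁) (hΨ₂meas : Measurable Ψ₂)
    (hΨ₁pos : ∀ t > 0, 0 < Ψ₁ t) (hΨ₂pos : ∀ t > 0, 0 < Ψ₂ t)
    {A₁ : ℝ} (hA₁ : 0 < A₁)
    (hΨ₁dbl : ∀ r s : ℝ, 0 < r → r ≤ s → s ≤ 2 * r → Ψ₁ s / Ψ₁ r ≤ A₁)
    {A₃ : ℝ} (hA₃ : 0 < A₃)
    (hΨ₂dbl : ∀ r s : ℝ, 0 < r → r ≤ s → s ≤ 2 * r → Ψ₂ s / Ψ₂ r ≤ A₃)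
    {f : Euc n → ℝ} (hf : MemLocLp n p₁ f) (x : Euc n) (r : ℝ) :
    ∫⁻ y in ball x r, ENNReal.ofReal (|f y| ^ p₂ * Ψ₂ (dist x y) / dist x y ^ (n : ℝ)) ≤
      ENNReal.ofReal (4 * A₃ ^ 2 * (4 ^ n * (A₁ ^ 2) ^ p₂)) * volume (ball (0 : Euc n) 1) *
        (∫⁻ t in Ioo (0 : ℝ) (r / 2), ENNReal.ofReal (Ψ₁ t ^ p₂ * Ψ₂ t / t)) *
        morreyNorm n p₁ Ψ₁ f ^ p₂ := by
  have hne : Nonempty (Fin n) := ⟨⟨0, hn⟩⟩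
  set N := morreyNorm n p₁ Ψ₁ f
  set ω := volume (ball (0 : Euc n) 1)
  let G : Euc n → ℝ≥0∞ := fun y => ENNReal.ofReal (|f y| ^ p₂)
  let k : ℝ → ℝ≥0∞ := fun t => ENNReal.ofReal (Ψ₂ t / t ^ (n + 1))
  have hG : AEMeasurable G volume :=
    ((hf.aemeasurable_abs (hp₂.trans_le hp)).pow_const p₂).ennreal_ofReal
  have hk : Measurable k := by fun_prop
  let S : Set (Euc n × ℝ) := {z | dist x z.1 < 4 * z.2}
  have hS : MeasurableSet S := by
    refine (isOpen_lt ?_ ?_).measurableSet <;> fun_prop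
  have step1 : ∫⁻ y in ball x r,
        ENNReal.ofReal (|f y| ^ p₂ * Ψ₂ (dist x y) / dist x y ^ (n : ℝ)) ≤
      ∫⁻ y, ENNReal.ofReal (4 * A₃ ^ 2) * ∫⁻ t in Ioo (0 : ℝ) (r / 2),
        S.indicator (fun z => G z.1 * k z.2) (y, t) := by
    refine le_trans (setLIntegral_mono_ae' measurableSet_ball ?_)
      (setLIntegral_le_lintegral (ball x r) _)
    have hx : ∀ᵐ y ∂(volume : Measure (Euc n)), y ≠ x := by
      simp [ae_iff]
    filter_upwards [hx] with y hy hyr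
    have hd : 0 < dist x y := dist_pos.2 hy.symm
    have hdr : dist x y < r := by rwa [dist_comm]
    have hker := kernel_le_lintegral (n := n) hΨ₂pos hA₃ hΨ₂dbl hd hdr
    calc ENNReal.ofReal (|f y| ^ p₂ * Ψ₂ (dist x y) / dist x y ^ (n : ℝ))
        = G y * ENNReal.ofReal (Ψ₂ (dist x y) / dist x y ^ n) := by
          rw [Real.rpow_natCast, mul_div_assoc, ENNReal.ofReal_mul (by positivity)]
      _ ≤ G y * _ := mul_le_mul_right hker _
      _ = _ := by
          rw [mul_left_comm]
          congr 1
          rw [← lintegral_const_mul']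
          · refine lintegral_congr fun t => ?_
            by_cases h : dist x y < 4 * t
            · rw [indicator_of_mem (by exact h), indicator_of_mem (by exact h)]
            · rw [indicator_of_notMem (by exact h), indicator_of_notMem (by exact h), mul_zero]
          · exact ENNReal.ofReal_ne_top
  have step2 : ∫⁻ y, ∫⁻ t in Ioo (0 : ℝ) (r / 2), S.indicator (fun z => G z.1 * k z.2) (y, t) =
      ∫⁻ t in Ioo (0 : ℝ) (r / 2), k t * ∫⁻ y in ball x (4 * t), G y := by
    rw [lintegral_lintegral_swap]
    · refine lintegral_congr fun t => ?_
      rw [← lintegral_const_mul' _ _ ENNReal.ofReal_ne_top, ← lintegral_indicator measurableSet_ball]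
      refine lintegral_congr fun y => ?_
      by_cases h : dist x y < 4 * t
      · rw [indicator_of_mem (by exact h),
          indicator_of_mem (by rwa [mem_ball, dist_comm]), mul_comm]
      · rw [indicator_of_notMem (by exact h),
          indicator_of_notMem (by rwa [mem_ball, dist_comm])]
    · exact (hG.comp_fst.mul (hk.comp measurable_snd).aemeasurable).indicator hS
  have step3 : ∫⁻ t in Ioo (0 : ℝ) (r / 2), k t * ∫⁻ y in ball x (4 * t), G y ≤
      ∫⁻ t in Ioo (0 : ℝ) (r / 2), (ENNReal.ofReal (4 ^ n * (A₁ ^ 2) ^ p₂) * ω * N ^ p₂) *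
        ENNReal.ofReal (Ψ₁ t ^ p₂ * Ψ₂ t / t) := by
    refine setLIntegral_mono' measurableSet_Ioo fun t ht => ?_
    have ht0 : 0 < t := ht.1
    have h4t : 0 < 4 * t := by linarith
    have hb := lintegral_ball_le_morreyNorm hp₂ hp hf x h4t (hΨ₁pos _ h4t)
    have hvol : volume (ball x (4 * t)) = ENNReal.ofReal ((4 * t) ^ n) * ω := by
      simpa using Measure.addHaar_ball (volume : Measure (Euc n)) x h4t.le
    have hΨ₁ := le_of_rightDoubling hΨ₁pos hA₁ hΨ₁dbl ht0 (d := 4 * t) (by linarith) le_rfl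
    have h1 := hΨ₁pos t ht0
    have h2 := hΨ₂pos t ht0
    calc k t * ∫⁻ y in ball x (4 * t), G y
        ≤ k t * (ENNReal.ofReal ((4 * t) ^ n) * ω *
            (ENNReal.ofReal (A₁ ^ 2 * Ψ₁ t) * N) ^ p₂) := by
          rw [← hvol]
          refine mul_le_mul_right (hb.trans ?_) _
          gcongr
      _ = (k t * ENNReal.ofReal ((4 * t) ^ n) * ENNReal.ofReal ((A₁ ^ 2 * Ψ₁ t) ^ p₂)) *
            (ω * N ^ p₂) := by
          rw [ENNReal.mul_rpow_of_nonneg _ _ hp₂.le,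
            ENNReal.ofReal_rpow_of_nonneg (by positivity) hp₂.le]
          ring
      _ = (ENNReal.ofReal (4 ^ n * (A₁ ^ 2) ^ p₂) * ENNReal.ofReal (Ψ₁ t ^ p₂ * Ψ₂ t / t)) *
            (ω * N ^ p₂) := by
          congr 1
          rw [← ENNReal.ofReal_mul (by positivity), ← ENNReal.ofReal_mul (by positivity),
            ← ENNReal.ofReal_mul (by positivity)]
          congr 1
          rw [Real.mul_rpow (by positivity) h1.le, mul_pow, pow_succ]
          field_simp
      _ = _ := by ring
  rw [lintegral_const_mul' _ _ ENNReal.ofReal_ne_top, step2] at step1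
  refine step1.trans ((mul_le_mul_right step3 _).trans (le_of_eq ?_))
  rw [lintegral_const_mul, ENNReal.ofReal_mul (p := 4 * A₃ ^ 2) (by positivity)]
  · ring
  · fun_prop

/-- Doubling `m` times from `1` bounds a right-doubling function on `[1, 2^m]`. -/
lemma exists_bound_of_rightDoubling {Ψ : ℝ → ℝ} (hpos : ∀ t > 0, 0 < Ψ t) {A : ℝ} (hA : 0 < A)
    (hdbl : ∀ r s : ℝ, 0 < r → r ≤ s → s ≤ 2 * r → Ψ s / Ψ r ≤ A) (m : ℕ) :
    ∃ C, ∀ t, 1 ≤ t → t ≤ 2 ^ m → Ψ t ≤ C := by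
  induction m with
  | zero =>
    refine ⟨Ψ 1, fun t h1 h2 => ?_⟩
    rw [pow_zero] at h2
    rw [le_antisymm h2 h1]
  | succ m ih =>
    obtain ⟨C, hC⟩ := ih
    refine ⟨max C (A * C), fun t h1 h2 => ?_⟩
    rw [pow_succ] at h2
    rcases le_total t (2 ^ m) with h | h
    · exact (hC t h1 h).trans (le_max_left _ _)
    · have hm : (1 : ℝ) ≤ 2 ^ m := one_le_pow₀ (by norm_num)
      have e := hdbl (2 ^ m) t (by positivity) h (by linarith)
      rw [div_le_iff₀ (hpos _ (by positivity))] at e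
      exact (e.trans (mul_le_mul_of_nonneg_left (hC _ hm le_rfl) hA.le)).trans (le_max_right _ _)

/-- Integrability near `0` propagates to every bounded interval, so the Bochner integrals in the
conclusion are genuine for all `r`. -/
lemma integrableOn_weight {p : ℝ} (hp : 0 < p)
    {Ψ₁ Ψ₂ : ℝ → ℝ} (hΨ₁meas : Measurable Ψ₁) (hΨ₂meas : Measurable Ψ₂)
    (hΨ₁pos : ∀ t > 0, 0 < Ψ₁ t) (hΨ₂pos : ∀ t > 0, 0 < Ψ₂ t)
    {A₁ : ℝ} (hA₁ : 0 < A₁)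
    (hΨ₁dbl : ∀ r s : ℝ, 0 < r → r ≤ s → s ≤ 2 * r → Ψ₁ s / Ψ₁ r ≤ A₁)
    {A₃ : ℝ} (hA₃ : 0 < A₃)
    (hΨ₂dbl : ∀ r s : ℝ, 0 < r → r ≤ s → s ≤ 2 * r → Ψ₂ s / Ψ₂ r ≤ A₃)
    (hint : IntegrableOn (fun t => Ψ₁ t ^ p * Ψ₂ t / t) (Ioo (0 : ℝ) 1) volume) (R : ℝ) :
    IntegrableOn (fun t => Ψ₁ t ^ p * Ψ₂ t / t) (Ioo (0 : ℝ) R) volume := by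
  obtain ⟨m, hm⟩ := pow_unbounded_of_one_lt R (one_lt_two : (1 : ℝ) < 2)
  obtain ⟨C₁, hC₁⟩ := exists_bound_of_rightDoubling hΨ₁pos hA₁ hΨ₁dbl m
  obtain ⟨C₂, hC₂⟩ := exists_bound_of_rightDoubling hΨ₂pos hA₃ hΨ₂dbl m
  have hbig : IntegrableOn (fun t => Ψ₁ t ^ p * Ψ₂ t / t) (Icc (1 : ℝ) (2 ^ m)) volume := by
    refine IntegrableOn.of_bound (C := C₁ ^ p * C₂) (by simp)
      (Measurable.aestronglyMeasurable (by fun_prop)) ?_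
    refine (ae_restrict_iff' measurableSet_Icc).2 (Eventually.of_forall fun t ht => ?_)
    have ht0 : 0 < t := by linarith [ht.1]
    have h1 := hΨ₁pos t ht0
    have h2 := hΨ₂pos t ht0
    have b1 := hC₁ t ht.1 ht.2
    have b2 := hC₂ t ht.1 ht.2
    rw [Real.norm_of_nonneg (by positivity)]
    calc Ψ₁ t ^ p * Ψ₂ t / t ≤ Ψ₁ t ^ p * Ψ₂ t := div_le_self (by positivity) ht.1
      _ ≤ _ := by
        have : 0 < C₁ := h1.trans_le b1
        gcongr
  refine (hint.union hbig).mono_set fun t ht => ?_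
  rcases lt_or_ge t 1 with h | h
  · exact Or.inl ⟨ht.1, h⟩
  · exact Or.inr ⟨h, (ht.2.trans hm).le⟩

/-- If `Ψ₁` is doubling, `Ψ₂` is right-doubling, and
`∫₀¹ Ψ₁(t)^{p₂} Ψ₂(t)/t dt < ∞`, then `L^{p₁,Ψ₁}(ℝ^n) ⊆ S_{p₂,Ψ₂}(ℝ^n)`; moreover there is
`c > 0` with `η_{p₂,Ψ₂}f(r) ≤ c (∫₀^{r/2} Ψ₁(t)^{p₂} Ψ₂(t)/t dt)^{1/p₂} ‖f‖_{L^{p₁,Ψ₁}}`. -/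
theorem morrey_subset_stummel (n : ℕ) (hn : 1 ≤ n) (p₁ p₂ : ℝ)
    (hp₂ : 1 ≤ p₂) (hp : p₂ ≤ p₁)
    (Ψ₁ Ψ₂ : ℝ → ℝ) (hΨ₁meas : Measurable Ψ₁) (hΨ₂meas : Measurable Ψ₂)
    (hΨ₁pos : ∀ t > 0, 0 < Ψ₁ t) (hΨ₂pos : ∀ t > 0, 0 < Ψ₂ t)
    (A₁ : ℝ) (hA₁ : 0 < A₁)
    (hΨ₁dbl : ∀ r s : ℝ, 0 < r → r ≤ s → s ≤ 2 * r →
      A₁⁻¹ ≤ Ψ₁ s / Ψ₁ r ∧ Ψ₁ s / Ψ₁ r ≤ A₁)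
    (A₃ : ℝ) (hA₃ : 0 < A₃)
    (hΨ₂dbl : ∀ r s : ℝ, 0 < r → r ≤ s → s ≤ 2 * r → Ψ₂ s / Ψ₂ r ≤ A₃)
    (hint : IntegrableOn (fun t => Ψ₁ t ^ p₂ * Ψ₂ t / t) (Ioo (0 : ℝ) 1) volume) :
    (∀ f : Euc n → ℝ, MemMorrey n p₁ Ψ₁ f → MemStummel n p₂ Ψ₂ f) ∧
    ∃ c > 0, ∀ f : Euc n → ℝ, MemMorrey n p₁ Ψ₁ f → ∀ r > 0,
      stummelMod n p₂ Ψ₂ f r ≤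
        ENNReal.ofReal c *
          ENNReal.ofReal ((∫ t in Ioo (0 : ℝ) (r / 2), Ψ₁ t ^ p₂ * Ψ₂ t / t) ^ (1 / p₂)) *
          morreyNorm n p₁ Ψ₁ f := by
  have hp₂0 : 0 < p₂ := by linarith
  have hdbl₁ : ∀ r s : ℝ, 0 < r → r ≤ s → s ≤ 2 * r → Ψ₁ s / Ψ₁ r ≤ A₁ :=
    fun r s h1 h2 h3 => (hΨ₁dbl r s h1 h2 h3).2
  have hne : Nonempty (Fin n) := ⟨⟨0, hn⟩⟩
  let φ : ℝ → ℝ := fun t => Ψ₁ t ^ p₂ * Ψ₂ t / t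
  let I : ℝ → ℝ≥0∞ := fun r => ∫⁻ t in Ioo (0 : ℝ) (r / 2), ENNReal.ofReal (φ t)
  have hφI : ∀ R, IntegrableOn φ (Ioo (0 : ℝ) R) volume :=
    integrableOn_weight hp₂0 hΨ₁meas hΨ₂meas hΨ₁pos hΨ₂pos hA₁ hdbl₁ hA₃ hΨ₂dbl hint
  have hφ0 : ∀ R, 0 ≤ᵐ[volume.restrict (Ioo (0 : ℝ) R)] φ := fun R => by
    refine (ae_restrict_iff' measurableSet_Ioo).2 (Eventually.of_forall fun t ht => ?_)
    have h0 : 0 < t := ht.1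
    have h1 := hΨ₁pos t ht.1
    have h2 := hΨ₂pos t ht.1
    change 0 ≤ Ψ₁ t ^ p₂ * Ψ₂ t / t
    positivity
  have hIeq : ∀ R, ENNReal.ofReal (∫ t in Ioo (0 : ℝ) R, φ t) =
      ∫⁻ t in Ioo (0 : ℝ) R, ENNReal.ofReal (φ t) := fun R =>
    ofReal_integral_eq_lintegral_ofReal (hφI R) (hφ0 R)
  set ω := volume (ball (0 : Euc n) 1) with hω
  have hω0 : 0 < ω.toReal :=
    ENNReal.toReal_pos (measure_ball_pos volume _ one_pos).ne' measure_ball_lt_top.ne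
  have hωe : ω = ENNReal.ofReal ω.toReal := (ENNReal.ofReal_toReal measure_ball_lt_top.ne).symm
  let K : ℝ := 4 * A₃ ^ 2 * (4 ^ n * (A₁ ^ 2) ^ p₂) * ω.toReal
  have hK : 0 < K := by positivity
  have key : ∀ f : Euc n → ℝ, MemMorrey n p₁ Ψ₁ f → ∀ r, stummelMod n p₂ Ψ₂ f r ≤
      ENNReal.ofReal (K ^ (1 / p₂)) * I r ^ (1 / p₂) * morreyNorm n p₁ Ψ₁ f := by
    intro f hf r
    refine iSup_le fun x => ?_
    have h := lintegral_stummel_le hn hp₂0 hp hΨ₁meas hΨ₂meas hΨ₁pos hΨ₂pos hA₁ hdbl₁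
      hA₃ hΨ₂dbl hf.1 x r
    rw [← hω, hωe, ← ENNReal.ofReal_mul (by positivity)] at h
    have h' := ENNReal.rpow_le_rpow h (z := 1 / p₂) (by positivity)
    rwa [ENNReal.mul_rpow_of_nonneg _ _ (by positivity),
      ENNReal.mul_rpow_of_nonneg _ _ (by positivity), ← ENNReal.rpow_mul,
      mul_one_div_cancel hp₂0.ne', ENNReal.rpow_one,
      ENNReal.ofReal_rpow_of_nonneg (by positivity) (by positivity)] at h'
  have hIfin : ∀ r, I r ≠ ⊤ := fun r => by
    change ∫⁻ t in Ioo (0 : ℝ) (r / 2), ENNReal.ofReal (φ t) ≠ ⊤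
    rw [← hIeq]
    exact ENNReal.ofReal_ne_top
  have hI0 : Tendsto I (nhdsWithin 0 (Ioi 0)) (nhds 0) := by
    have h := tendsto_setLIntegral_zero (μ := volume.restrict (Ioo (0 : ℝ) 1))
      (f := fun t => ENNReal.ofReal (φ t)) (l := nhdsWithin (0 : ℝ) (Ioi 0))
      (s := fun r => Ioo (0 : ℝ) (r / 2)) (by rw [← hIeq]; exact ENNReal.ofReal_ne_top) ?_
    · refine h.congr' ?_
      filter_upwards [Ioo_mem_nhdsGT (one_pos : (0 : ℝ) < 1)] with r hr
      rw [Measure.restrict_restrict measurableSet_Ioo, inter_eq_left.2]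
      exact Ioo_subset_Ioo le_rfl (by linarith [hr.2])
    · have h2 : Tendsto (fun r : ℝ => ENNReal.ofReal (r / 2)) (nhdsWithin 0 (Ioi 0)) (nhds 0) := by
        have : Continuous fun r : ℝ => ENNReal.ofReal (r / 2) :=
          ENNReal.continuous_ofReal.comp (continuous_id.div_const 2)
        simpa using (this.tendsto 0).mono_left nhdsWithin_le_nhds
      refine tendsto_of_tendsto_of_tendsto_of_le_of_le tendsto_const_nhds h2
        (fun _ => zero_le) fun r => ?_
      exact (Measure.restrict_apply_le _ _).trans (by simp)
  refine ⟨fun f hf => ⟨hf.1.mono_exponent hp₂0 hp, fun r _ => ?_, ?_⟩,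
    K ^ (1 / p₂), by positivity, fun f hf r _ => ?_⟩
  · refine (key f hf r).trans_lt (ENNReal.mul_lt_top (ENNReal.mul_lt_top ENNReal.ofReal_lt_top
      (ENNReal.rpow_lt_top_of_nonneg (by positivity) (hIfin r))) hf.2)
  · have h1 : Tendsto (fun r => I r ^ (1 / p₂)) (nhdsWithin 0 (Ioi 0)) (nhds 0) := by
      have := ((ENNReal.continuous_rpow_const (y := 1 / p₂)).tendsto 0).comp hI0
      rwa [ENNReal.zero_rpow_of_pos (by positivity)] at this
    have h2 := ENNReal.Tendsto.mul_const
      (ENNReal.Tendsto.const_mul h1 (Or.inr (ENNReal.ofReal_ne_top (r := K ^ (1 / p₂)))))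
      (Or.inr hf.2.ne)
    rw [mul_zero, zero_mul] at h2
    exact tendsto_of_tendsto_of_tendsto_of_le_of_le tendsto_const_nhds h2
      (fun _ => zero_le) (key f hf)
  · refine (key f hf r).trans (le_of_eq ?_)
    rw [← ENNReal.ofReal_rpow_of_nonneg
      (integral_nonneg_of_ae (hφ0 (r / 2))) (by positivity), hIeq (r / 2)]
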